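/- For all n ≥ 0, Σ_{σ ∈ D_n} q^{maj(σ)} t^{exc(σ)} = Σ_{k=0}^{n} (−1)^k q^{binom(k,2)} [n choose k]_q · A_{n−k}^{maj,exc}(q,t), where D_n is the set of derangements of [n] and A_m^{maj,exc}(q,t) = Σ_{σ∈S_m} q^{maj(σ)} t^{exc(σ)}. -/

import Mathlib

/-!
Every permutation of `[n]` is determined by the set `A` of its non-fixed points and by its derangement
part: the derangement `α` of `[k]`, `k = |A|`, obtained by standardizing the restriction to `A`.
Excedances are preserved by this reduction (`exc_inflate`), and

  `∑_{|A| = k} q ^ maj (inflate A α) = [n choose k]_q * q ^ maj α`   (`sum_inflate`),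

so that `A_n = ∑_k [n choose k]_q D_k` (`qEulerPoly_eq`), where `D_k` is the derangement polynomial.
Gaussian inversion (`qbinom_inversion`) then gives the theorem; it rests on `q`-trinomial revision and
on the vanishing of `∑_k (-1)^k q^(k choose 2) [n choose k]_q` for `n > 0`.

For `sum_inflate`, observe as Wachs did that the descents of a permutation do not change if all fixed
points are given one common value `F` lying above all subexcedances and below all excedances, and the
letters within each of these two classes keep their order. Indeed `σ i > i` and `σ (i+1) < i+1` force a
descent at `i`, and so on for each pair of types of neighbouring letters (`PDes_inflate`). Hence
`inflate A α` has the descents of the word obtained from `α` by inserting copies of `F` outside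
`A`. The major index generating function of all such insertions (`sum_wmaj`) follows by splitting
according to whether the last letter is `F`: the two partial sums satisfy recurrences by removal of
the last letter, with closed forms (`endF_endU_eq`) depending, besides the major index of the base word,
only on whether the last base letter exceeds `F`; the recurrences reduce to the two `q`-Pascal identities.
-/

open scoped Classical

/-- Descent set of `σ ∈ S_n` (0-based positions). -/
noncomputable def DesSet (n : ℕ) (σ : Equiv.Perm (Fin n)) : Finset ℕ :=
  (Finset.range n).filter fun i =>
    ∃ (h1 : i < n) (h2 : i + 1 < n), σ ⟨i + 1, h2⟩ < σ ⟨i, h1⟩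

/-- Major index. -/
noncomputable def maj (n : ℕ) (σ : Equiv.Perm (Fin n)) : ℕ :=
  ∑ i ∈ DesSet n σ, (i + 1)

/-- Excedance number. -/
noncomputable def exc (n : ℕ) (σ : Equiv.Perm (Fin n)) : ℕ :=
  ((Finset.range n).filter fun i => ∃ h : i < n, i < (σ ⟨i, h⟩ : ℕ)).card

/-- Gaussian (q-)binomial coefficient, via the q-Pascal recurrence. -/
def qbinom {R : Type*} [CommSemiring R] (q : R) : ℕ → ℕ → R
  | _, 0 => 1
  | 0, _ + 1 => 0
  | n + 1, k + 1 => qbinom q n k + q ^ (k + 1) * qbinom q n (k + 1)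

/-- Two-variable polynomial ring `ℤ[q,t]`: `q = X true`, `t = X false`. -/
abbrev Rqt : Type := MvPolynomial Bool ℤ

noncomputable def qv : Rqt := MvPolynomial.X true
noncomputable def tv : Rqt := MvPolynomial.X false

/-- `A_m^{maj,exc}(q,t)`. -/
noncomputable def qEulerPoly (m : ℕ) : Rqt :=
  ∑ σ : Equiv.Perm (Fin m), qv ^ maj m σ * tv ^ exc m σ

/-! ### Gaussian binomials and q-binomial inversion -/

theorem qbinom_zero_right {R : Type*} [CommSemiring R] (q : R) (n : ℕ) : qbinom q n 0 = 1 := by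
  cases n <;> rfl

theorem qbinom_succ_succ {R : Type*} [CommSemiring R] (q : R) (n k : ℕ) :
    qbinom q (n + 1) (k + 1) = qbinom q n k + q ^ (k + 1) * qbinom q n (k + 1) := rfl

theorem qbinom_eq_zero {R : Type*} [CommSemiring R] (q : R) (n : ℕ) :
    ∀ k, n < k → qbinom q n k = 0 := by
  induction n with
  | zero => intro k hk; cases k with
    | zero => omega
    | succ k => rfl
  | succ n ih => intro k hk; cases k with
    | zero => omega
    | succ k => rw [qbinom_succ_succ, ih _ (by omega), ih _ (by omega)]; simp

/-- `q`-power bookkeeping; for `n < k` the truncated `n - k` is harmless because both sides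
vanish. -/
theorem pow_mul_qbinom {R : Type*} [CommSemiring R] (q : R) (n k : ℕ) :
    q ^ (k + 1) * (q ^ (n - k) * qbinom q n k) = q ^ (n + 1) * qbinom q n k := by
  rcases le_or_gt k n with h | h
  · rw [← mul_assoc, ← pow_add]; congr 2; omega
  · simp [qbinom_eq_zero q n k h]

/-- Companion of `pow_mul_qbinom` for the lower index `k + 1`; again both sides vanish if
`n < k`. -/
theorem pow_mul_qbinom' {R : Type*} [CommSemiring R] (q : R) (n m k : ℕ) (h : m ≤ n + 1) :
    q ^ (n - k) * q ^ (k + 1) * qbinom q m (k + 1) = q ^ (n + 1) * qbinom q m (k + 1) := by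
  rcases le_or_gt k n with hk | hk
  · rw [← pow_add]; congr 2; omega
  · simp [qbinom_eq_zero q m (k + 1) (by omega)]

/-- The second `q`-Pascal recurrence. -/
theorem qbinom_succ_succ' {R : Type*} [CommRing R] (q : R) (n : ℕ) :
    ∀ k, qbinom q (n + 1) (k + 1) = q ^ (n - k) * qbinom q n k + qbinom q n (k + 1) := by
  induction n with
  | zero => intro k; cases k <;> simp [qbinom]
  | succ n ih =>
    intro k
    cases k with
    | zero =>
      have h1 := qbinom_succ_succ q (n + 1) 0
      have h2 := ih 0
      have h3 := qbinom_succ_succ q n 0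
      simp only [qbinom_zero_right, Nat.sub_zero, zero_add, pow_one, mul_one] at *
      linear_combination h1 + q * h2 - h3
    | succ k =>
      have h1 := qbinom_succ_succ q (n + 1) (k + 1)
      have h2 := ih (k + 1)
      have h3 := ih k
      have h4 := qbinom_succ_succ q n k
      have h5 := qbinom_succ_succ q n (k + 1)
      have h7 := pow_mul_qbinom q n (k + 1)
      rw [Nat.add_sub_add_right]
      linear_combination h1 + h3 + q ^ (k + 2) * h2 - h5 - q ^ (n - k) * h4 + h7
        - pow_mul_qbinom' q n n k (by omega)

/-- The `q`-factorial `[n]_q!`. -/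
noncomputable def qfact (n : ℕ) : Rqt :=
  ∏ j ∈ Finset.range n, ∑ l ∈ Finset.range (j + 1), qv ^ l

theorem qfact_ne_zero (n : ℕ) : qfact n ≠ 0 := by
  refine Finset.prod_ne_zero_iff.2 fun j _ h => ?_
  -- at `q = 1` the `q`-integer `[j + 1]_q` is `j + 1`
  have := congrArg (MvPolynomial.eval (fun _ => (1 : ℤ))) h
  simp [qv] at this
  omega

/-- The factorial formula for `[a + b choose a]_q`, free of division. -/
theorem qbinom_mul_qfact (a : ℕ) :
    ∀ b, qbinom qv (a + b) a * (qfact a * qfact b) = qfact (a + b) := by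
  suffices H : ∀ N a b, a + b = N →
      qbinom qv (a + b) a * (qfact a * qfact b) = qfact (a + b) from fun b => H _ a b rfl
  clear a
  intro N
  induction N with
  | zero =>
    intro a b h
    obtain ⟨rfl, rfl⟩ : a = 0 ∧ b = 0 := by omega
    simp [qfact, qbinom]
  | succ N ih =>
    intro a b h
    cases a with
    | zero => simp [qbinom_zero_right, qfact]
    | succ a =>
      cases b with
      | zero =>
        have h1 := ih a 0 (by omega)
        have h2 := qbinom_succ_succ qv a a
        rw [qbinom_eq_zero qv a (a + 1) (by omega)] at h2
        simp only [add_zero] at *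
        have h3 : qfact (a + 1) = qfact a * ∑ l ∈ Finset.range (a + 1), qv ^ l :=
          Finset.prod_range_succ _ _
        rw [h2, h3]
        linear_combination (∑ l ∈ Finset.range (a + 1), qv ^ l) * h1
      | succ b =>
        have h1 := ih a (b + 1) (by omega)
        have h2 := ih (a + 1) b (by omega)
        have e : a + 1 + b = a + (b + 1) := by omega
        have e' : a + 1 + (b + 1) = a + (b + 1) + 1 := by omega
        rw [e] at h2
        rw [e']
        have h3 : qfact (a + 1) = qfact a * ∑ l ∈ Finset.range (a + 1), qv ^ l :=
          Finset.prod_range_succ _ _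
        have h4 : qfact (b + 1) = qfact b * ∑ l ∈ Finset.range (b + 1), qv ^ l :=
          Finset.prod_range_succ _ _
        have h5 : qfact (a + (b + 1) + 1)
            = qfact (a + (b + 1)) * ∑ l ∈ Finset.range (a + (b + 1) + 1), qv ^ l :=
          Finset.prod_range_succ _ _
        have h6 : ∑ l ∈ Finset.range (a + (b + 1) + 1), qv ^ l
            = ∑ l ∈ Finset.range (a + 1), qv ^ l
              + qv ^ (a + 1) * ∑ l ∈ Finset.range (b + 1), qv ^ l := by
          rw [show a + (b + 1) + 1 = (a + 1) + (b + 1) by omega, Finset.sum_range_add,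
            Finset.mul_sum]
          simp only [pow_add]
        rw [h5, h6, qbinom_succ_succ]
        rw [h3] at h2 ⊢
        rw [h4] at h1 ⊢
        linear_combination (∑ l ∈ Finset.range (a + 1), qv ^ l) * h1 +
          (qv ^ (a + 1) * ∑ l ∈ Finset.range (b + 1), qv ^ l) * h2

/-- `q`-trinomial revision: with `n = a + b + c`, both sides are the `q`-multinomial coefficient
`[n]! / ([a]! [b]! [c]!)`. -/
theorem qbinom_mul_qbinom (a b c : ℕ) :
    qbinom qv (a + b + c) a * qbinom qv (b + c) b
      = qbinom qv (a + b + c) b * qbinom qv (a + c) a := by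
  have h1 := qbinom_mul_qfact a (b + c)
  have h2 := qbinom_mul_qfact b c
  have h3 := qbinom_mul_qfact b (a + c)
  have h4 := qbinom_mul_qfact a c
  rw [← add_assoc] at h1
  rw [← add_assoc, add_comm b a] at h3
  apply mul_right_cancel₀
    (mul_ne_zero (mul_ne_zero (qfact_ne_zero a) (qfact_ne_zero b)) (qfact_ne_zero c))
  rw [← h2] at h1
  rw [← h4] at h3
  linear_combination h1 - h3

theorem sum_alternating_qbinom {R : Type*} [CommRing R] (q : R) (n : ℕ) :
    ∑ k ∈ Finset.range (n + 1), (-1) ^ k * q ^ Nat.choose k 2 * qbinom q n k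
      = if n = 0 then 1 else 0 := by
  cases n with
  | zero => simp [qbinom]
  | succ n =>
    -- the first `q`-Pascal recurrence makes the sum telescope
    have H : ∀ m, ∑ k ∈ Finset.range (m + 1), (-1) ^ k * q ^ Nat.choose k 2 * qbinom q (n + 1) k
        = (-1) ^ m * q ^ Nat.choose (m + 1) 2 * qbinom q n m := by
      intro m
      induction m with
      | zero => simp [qbinom_zero_right]
      | succ m ih =>
        have hc : Nat.choose (m + 2) 2 = (m + 1) + Nat.choose (m + 1) 2 := by
          rw [Nat.choose_succ_succ' (m + 1) 1, Nat.choose_one_right]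
        rw [Finset.sum_range_succ, ih, qbinom_succ_succ, hc, pow_add]
        ring
    rw [H, qbinom_eq_zero q n _ (by omega)]
    simp

/-- `q`-binomial inversion. -/
theorem qbinom_inversion (A D : ℕ → Rqt)
    (h : ∀ n, A n = ∑ j ∈ Finset.range (n + 1), qbinom qv n j * D j) (n : ℕ) :
    D n = ∑ k ∈ Finset.range (n + 1),
      (-1 : Rqt) ^ k * qv ^ Nat.choose k 2 * qbinom qv n k * A (n - k) := by
  have h1 : ∀ k ∈ Finset.range (n + 1),
      (-1 : Rqt) ^ k * qv ^ Nat.choose k 2 * qbinom qv n k * A (n - k)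
      = ∑ j ∈ Finset.range (n + 1), if k + j ≤ n then
          ((-1) ^ k * qv ^ Nat.choose k 2 * qbinom qv (n - j) k) * (qbinom qv n j * D j)
          else 0 := by
    intro k hk
    rw [Finset.mem_range] at hk
    rw [h, Finset.mul_sum, ← Finset.sum_filter]
    have : (Finset.range (n + 1)).filter (fun j => k + j ≤ n) = Finset.range (n - k + 1) := by
      ext j; simp; omega
    rw [this]
    refine Finset.sum_congr rfl fun j hj => ?_
    rw [Finset.mem_range] at hj
    obtain ⟨c, rfl⟩ : ∃ c, n = k + j + c := ⟨n - k - j, by omega⟩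
    have h2 := qbinom_mul_qbinom k j c
    rw [show k + j + c - k = j + c by omega, show k + j + c - j = k + c by omega]
    linear_combination ((-1) ^ k * qv ^ Nat.choose k 2 * D j) * h2
  rw [Finset.sum_congr rfl h1, Finset.sum_comm]
  have h3 : ∀ j ∈ Finset.range (n + 1),
      (∑ k ∈ Finset.range (n + 1), if k + j ≤ n then
          ((-1) ^ k * qv ^ Nat.choose k 2 * qbinom qv (n - j) k) * (qbinom qv n j * D j)
          else 0) = if j = n then D n else 0 := by
    intro j hj
    rw [Finset.mem_range] at hj
    rw [← Finset.sum_filter]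
    have : (Finset.range (n + 1)).filter (fun k => k + j ≤ n) = Finset.range (n - j + 1) := by
      ext k; simp; omega
    rw [this, ← Finset.sum_mul, sum_alternating_qbinom]
    by_cases hjn : j = n
    · subst hjn
      have h5 := qbinom_mul_qfact j 0
      have h6 : qbinom qv j j = 1 := by
        apply mul_right_cancel₀ (qfact_ne_zero j)
        simpa [qfact] using h5
      simp [h6]
    · rw [if_neg (by omega), if_neg hjn, zero_mul]
  rw [Finset.sum_congr rfl h3]
  simp

/-! ### The major index generating function of the shuffles of a word with equal letters -/

/-- Number of elements of `A` below `i`: the index of the letter of the base word standing at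
position `i`, when `i ∈ A`. -/
noncomputable def rk (A : Finset ℕ) (i : ℕ) : ℕ := (A.filter (· < i)).card

/-- Descent condition at `i` for the word carrying, in order, the letters `u₀, u₁, …` of a base
word at the positions in `A`, and the letter `F` elsewhere. The base word enters only through the
predicates `D j : u_j > u_{j+1}` and `E j : u_j > F`; no `u_j` equals `F`. -/
def WDes (D E : ℕ → Prop) (A : Finset ℕ) (i : ℕ) : Prop :=
  if i ∈ A then (if i + 1 ∈ A then D (rk A i) else E (rk A i)) else (i + 1 ∈ A ∧ ¬ E (rk A i))

/-- Major index of the first `n + 1` letters of the word described in `WDes`. -/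
noncomputable def wmaj (D E : ℕ → Prop) (A : Finset ℕ) (n : ℕ) : ℕ :=
  ∑ i ∈ Finset.range n, if WDes D E A i then i + 1 else 0

theorem rk_congr {A B : Finset ℕ} {i : ℕ} (h : ∀ j < i, j ∈ A ↔ j ∈ B) : rk A i = rk B i := by
  unfold rk
  congr 1
  ext j
  simp only [Finset.mem_filter]
  constructor
  · rintro ⟨h1, h2⟩; exact ⟨(h j h2).1 h1, h2⟩
  · rintro ⟨h1, h2⟩; exact ⟨(h j h2).2 h1, h2⟩

theorem wmaj_congr {D E : ℕ → Prop} {A B : Finset ℕ} {n : ℕ} (h : ∀ j ≤ n, j ∈ A ↔ j ∈ B) :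
    wmaj D E A n = wmaj D E B n := by
  refine Finset.sum_congr rfl fun i hi => ?_
  rw [Finset.mem_range] at hi
  have h1 : rk A i = rk B i := rk_congr fun j hj => h j (by omega)
  have h2 : WDes D E A i = WDes D E B i := by
    unfold WDes
    simp only [h1, h i (by omega), h (i + 1) (by omega)]
  simp only [h2]

theorem rk_of_subset {A : Finset ℕ} {n : ℕ} (h : A ⊆ Finset.range n) : rk A n = A.card := by
  unfold rk
  rw [Finset.filter_true_of_mem]
  exact fun x hx => Finset.mem_range.1 (h hx)

theorem rk_insert (A : Finset ℕ) (n : ℕ) : rk (insert n A) n = rk A n := by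
  unfold rk
  rw [Finset.filter_insert, if_neg (lt_irrefl n)]

theorem wmaj_succ (D E : ℕ → Prop) (A : Finset ℕ) (n : ℕ) :
    wmaj D E A (n + 1) = wmaj D E A n + if WDes D E A n then n + 1 else 0 :=
  Finset.sum_range_succ _ _

/-- Generating function of the words of length `n + 1` using `k` base letters and ending in `F`. -/
noncomputable def endF (D E : ℕ → Prop) (n k : ℕ) : Rqt :=
  ∑ A ∈ Finset.powersetCard k (Finset.range n), qv ^ wmaj D E A n

/-- Generating function of the words of length `n + 1` using `k + 1` base letters and ending in
the last of them. -/
noncomputable def endU (D E : ℕ → Prop) (n k : ℕ) : Rqt :=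
  ∑ A ∈ Finset.powersetCard k (Finset.range n), qv ^ wmaj D E (insert n A) n

theorem sum_powersetCard_range_succ (f : Finset ℕ → Rqt) (n k : ℕ) :
    ∑ A ∈ Finset.powersetCard (k + 1) (Finset.range (n + 1)), f A
      = ∑ A ∈ Finset.powersetCard (k + 1) (Finset.range n), f A
        + ∑ A ∈ Finset.powersetCard k (Finset.range n), f (insert n A) := by
  rw [Finset.range_add_one, Finset.powersetCard_succ_insert Finset.notMem_range_self,
    Finset.sum_union, Finset.sum_image]
  · intro A hA B hB h
    rw [Finset.mem_coe, Finset.mem_powersetCard] at hA hB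
    have hA' : n ∉ A := fun h => Finset.notMem_range_self (hA.1 h)
    have hB' : n ∉ B := fun h => Finset.notMem_range_self (hB.1 h)
    rw [← Finset.erase_insert hA', ← Finset.erase_insert hB', h]
  · rw [Finset.disjoint_left]
    intro A hA hA'
    obtain ⟨B, -, rfl⟩ := Finset.mem_image.1 hA'
    exact Finset.notMem_range_self ((Finset.mem_powersetCard.1 hA).1 (Finset.mem_insert_self n B))

theorem endF_zero_right (D E : ℕ → Prop) (n : ℕ) : endF D E n 0 = 1 := by
  simp [endF, wmaj, WDes]

/-- Removal of the final `F`: the shorter word ends in `F`, or in the base letter `u_k`, and then the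
final `F` creates a descent exactly when `u_k > F`. -/
theorem endF_succ (D E : ℕ → Prop) (n k : ℕ) :
    endF D E (n + 1) (k + 1)
      = endF D E n (k + 1) + endU D E n k * qv ^ (if E k then n + 1 else 0) := by
  unfold endF endU
  rw [sum_powersetCard_range_succ, Finset.sum_mul]
  congr 1
  all_goals
    refine Finset.sum_congr rfl fun A hA => ?_
    obtain ⟨h1, h2⟩ := Finset.mem_powersetCard.1 hA
    have h3 : n ∉ A := fun h => Finset.notMem_range_self (h1 h)
    have h4 : n + 1 ∉ A := fun h => by have := Finset.mem_range.1 (h1 h); omega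
    rw [wmaj_succ]
  · simp [WDes, h3, h4]
  · simp [WDes, h4, rk_insert, rk_of_subset h1, h2, pow_add]

theorem endU_succ_zero (D E : ℕ → Prop) (n : ℕ) :
    endU D E (n + 1) 0 = qv ^ (if E 0 then 0 else n + 1) := by
  have h : wmaj D E {n + 1} n = 0 := by
    refine Finset.sum_eq_zero fun i hi => ?_
    rw [Finset.mem_range] at hi
    rw [if_neg]
    simp only [WDes, Finset.mem_singleton]
    rw [if_neg (by omega)]
    omega
  have h2 : rk {n + 1} n = 0 := by simp [rk]
  simp [endU, wmaj_succ, h, WDes, h2]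

/-- Removal of the final base letter `u_{k+1}`: the shorter word ends in `F`, with a descent at the
end exactly when `u_{k+1} < F`, or in `u_k`, with a descent exactly when `u_k > u_{k+1}`. -/
theorem endU_succ (D E : ℕ → Prop) (n k : ℕ) :
    endU D E (n + 1) (k + 1)
      = endF D E n (k + 1) * qv ^ (if E (k + 1) then 0 else n + 1)
        + endU D E n k * qv ^ (if D k then n + 1 else 0) := by
  unfold endF endU
  rw [sum_powersetCard_range_succ, Finset.sum_mul, Finset.sum_mul]
  congr 1
  all_goals
    refine Finset.sum_congr rfl fun A hA => ?_
    obtain ⟨h1, h2⟩ := Finset.mem_powersetCard.1 hA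
    have h3 : n ∉ A := fun h => Finset.notMem_range_self (h1 h)
    have h4 : n + 1 ∉ A := fun h => by have := Finset.mem_range.1 (h1 h); omega
    rw [wmaj_succ]
  · have h5 : rk (insert (n + 1) A) n = k + 1 := by
      rw [rk_congr (B := A), rk_of_subset h1, h2]
      intro j hj; simp only [Finset.mem_insert]; grind
    have h6 : wmaj D E (insert (n + 1) A) n = wmaj D E A n :=
      wmaj_congr fun j hj => by simp; omega
    simp [WDes, h3, h5, h6, pow_add]
  · have h5 : rk (insert (n + 1) (insert n A)) n = k := by
      rw [rk_congr (B := A), rk_of_subset h1, h2]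
      intro j hj; simp only [Finset.mem_insert]; grind
    have h6 : wmaj D E (insert (n + 1) (insert n A)) n = wmaj D E (insert n A) n :=
      wmaj_congr fun j hj => by simp; omega
    simp [WDes, h5, h6, pow_add]

/-- Major index of the first `k + 1` letters of the base word. -/
noncomputable def bmaj (D : ℕ → Prop) (k : ℕ) : ℕ :=
  ∑ j ∈ Finset.range k, if D j then j + 1 else 0

/-- The hypotheses on `D` and `E` are the constraints that transitivity puts on comparisons of
`u_i`, `F` and `u_{i+1}` in a linear order. Apart from the factor `q ^ bmaj D k`, the closed forms
depend on the last base letter only through its comparison with `F`. -/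
theorem endF_endU_eq (D E : ℕ → Prop) (K : ℕ)
    (h1 : ∀ i, i + 1 < K → E i → ¬ E (i + 1) → D i)
    (h2 : ∀ i, i + 1 < K → ¬ E i → E (i + 1) → ¬ D i) (n : ℕ) :
    ∀ k < K,
      endF D E n (k + 1)
          = qv ^ bmaj D k * (if E k then qv ^ (k + 1) else 1) * qbinom qv n (k + 1) ∧
      endU D E n k = qv ^ bmaj D k * (if E k then 1 else qv ^ (n - k)) * qbinom qv n k := by
  induction n with
  | zero =>
    intro k hk
    have he : Finset.powersetCard (k + 1) (Finset.range 0) = ∅ :=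
      Finset.powersetCard_eq_empty.2 (by simp)
    refine ⟨by rw [endF, he]; simp [qbinom], ?_⟩
    cases k <;> simp [endU, qbinom, bmaj, wmaj]
  | succ n ih =>
    intro k hk
    constructor
    · rw [endF_succ, (ih k hk).1, (ih k hk).2]
      by_cases hE : E k
      · simp only [hE, if_true]
        rw [qbinom_succ_succ']
        linear_combination (-qv ^ bmaj D k) * pow_mul_qbinom qv n k
      · simp only [hE, if_false]
        rw [qbinom_succ_succ']
        ring
    · cases k with
      | zero =>
        rw [endU_succ_zero, qbinom_zero_right]
        by_cases hE : E 0 <;> simp [hE, bmaj]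
      | succ k =>
        rw [endU_succ, (ih k (by omega)).1, (ih k (by omega)).2, Nat.add_sub_add_right]
        have hb : bmaj D (k + 1) = bmaj D k + if D k then k + 1 else 0 :=
          Finset.sum_range_succ _ _
        have h3 := h1 k hk
        have h4 := h2 k hk
        have p1 := qbinom_succ_succ qv n k
        have p2 := qbinom_succ_succ' qv n k
        have p3 := pow_mul_qbinom qv n k
        have p4 := pow_mul_qbinom' qv n (n + 1) k le_rfl
        have p5 := pow_mul_qbinom' qv n n k (by omega)
        rw [hb, pow_add]
        by_cases e1 : E k <;> by_cases e2 : E (k + 1) <;> by_cases d : D k <;>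
          simp only [e1, e2, d, if_true, if_false, pow_zero, not_true, not_false_iff,
            forall_const, imp_false, IsEmpty.forall_iff, mul_one] at h3 h4 ⊢
        · linear_combination (-qv ^ bmaj D k) * p3 - qv ^ bmaj D k * qv ^ (k + 1) * p2
        · linear_combination - qv ^ bmaj D k * p1
        · linear_combination - qv ^ bmaj D k * (qv ^ (n + 1) * p1 + p4)
        · linear_combination - qv ^ bmaj D k * p2
        · linear_combination - qv ^ bmaj D k * (qv ^ (n + 1) * p2 + p4)
        · linear_combination - qv ^ bmaj D k * (qv ^ (n - k) * p1 + p5)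

/-- Inserting equal letters in all possible ways into a word of length `k + 1`, so as to obtain a
word of length `n + 1`, multiplies `q ^ maj` by `[n + 1 choose k + 1]_q`. -/
theorem sum_wmaj (D E : ℕ → Prop) (K : ℕ)
    (h1 : ∀ i, i + 1 < K → E i → ¬ E (i + 1) → D i)
    (h2 : ∀ i, i + 1 < K → ¬ E i → E (i + 1) → ¬ D i) (n k : ℕ) (hk : k < K) :
    ∑ A ∈ Finset.powersetCard (k + 1) (Finset.range (n + 1)), qv ^ wmaj D E A n
      = qv ^ bmaj D k * qbinom qv (n + 1) (k + 1) := by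
  have h := endF_endU_eq D E K h1 h2 n k hk
  rw [sum_powersetCard_range_succ]
  change endF D E n (k + 1) + endU D E n k = _
  rw [h.1, h.2]
  by_cases hE : E k
  · simp only [hE, if_true]; rw [qbinom_succ_succ]; ring
  · simp only [hE, if_false]; rw [qbinom_succ_succ']; ring

/-! ### Permutations with a prescribed derangement part -/

/-- `i` is a descent of `α`. -/
def PDes {k : ℕ} (α : Equiv.Perm (Fin k)) (i : ℕ) : Prop :=
  ∃ (h1 : i < k) (h2 : i + 1 < k), α ⟨i + 1, h2⟩ < α ⟨i, h1⟩

/-- `i` is an excedance of `α`. -/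
def PExc {k : ℕ} (α : Equiv.Perm (Fin k)) (i : ℕ) : Prop := ∃ h : i < k, i < (α ⟨i, h⟩ : ℕ)

theorem maj_succ_eq (n : ℕ) (σ : Equiv.Perm (Fin (n + 1))) : maj (n + 1) σ = bmaj (PDes σ) n := by
  have h : maj (n + 1) σ = ∑ i ∈ Finset.range (n + 1), if PDes σ i then i + 1 else 0 := by
    rw [← Finset.sum_filter]
    exact Finset.sum_congr (by ext; simp [DesSet, PDes]) fun _ _ => rfl
  rw [h, Finset.sum_range_succ, if_neg, add_zero]; · rfl
  rintro ⟨_, h2, _⟩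
  omega

theorem exc_eq (n : ℕ) (σ : Equiv.Perm (Fin n)) :
    exc n σ = (Finset.univ.filter fun x => x < σ x).card := by
  rw [← Finset.card_map Fin.valEmbedding]
  unfold exc
  congr 1
  ext i
  simp only [Finset.mem_filter, Finset.mem_range, Finset.mem_map, Finset.mem_univ, true_and]
  constructor
  · rintro ⟨-, h, hi⟩; exact ⟨⟨i, h⟩, hi, rfl⟩
  · rintro ⟨x, hx, rfl⟩; exact ⟨x.2, x.2, hx⟩

/-- The permutation acting on `A` as `α`, transported by the increasing bijection `[k] → A`, and
fixing the other points. -/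
noncomputable def inflate {n k : ℕ} (A : Finset (Fin n)) (h : A.card = k)
    (α : Equiv.Perm (Fin k)) : Equiv.Perm (Fin n) :=
  α.extendDomain (p := fun x => x ∈ A) (A.orderIsoOfFin h).toEquiv

theorem inflate_emb {n k : ℕ} (A : Finset (Fin n)) (h : A.card = k) (α : Equiv.Perm (Fin k))
    (j : Fin k) : inflate A h α (A.orderEmbOfFin h j) = A.orderEmbOfFin h (α j) :=
  Equiv.Perm.extendDomain_apply_image (p := fun x => x ∈ A) α (A.orderIsoOfFin h).toEquiv j

theorem inflate_notMem {n k : ℕ} (A : Finset (Fin n)) (h : A.card = k) (α : Equiv.Perm (Fin k))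
    (x : Fin n) (hx : x ∉ A) : inflate A h α x = x :=
  Equiv.Perm.extendDomain_apply_not_subtype (p := fun x => x ∈ A) α _ hx

theorem exists_emb {n k : ℕ} (A : Finset (Fin n)) (h : A.card = k) {x : Fin n} (hx : x ∈ A) :
    ∃ j, A.orderEmbOfFin h j = x := by
  have : x ∈ Set.range (A.orderEmbOfFin h) := by rw [Finset.range_orderEmbOfFin]; exact hx
  exact this

theorem exc_inflate {n k : ℕ} (A : Finset (Fin n)) (h : A.card = k) (α : Equiv.Perm (Fin k)) :
    exc n (inflate A h α) = exc k α := by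
  rw [exc_eq, exc_eq, ← Finset.card_map (A.orderEmbOfFin h).toEmbedding]
  congr 1
  ext x
  simp only [Finset.mem_filter, Finset.mem_univ, true_and, Finset.mem_map]
  constructor
  · intro hx
    by_cases hA : x ∈ A
    · obtain ⟨j, rfl⟩ := exists_emb A h hA
      rw [inflate_emb, OrderEmbedding.lt_iff_lt] at hx
      exact ⟨j, hx, rfl⟩
    · rw [inflate_notMem _ _ _ _ hA] at hx
      exact absurd hx (lt_irrefl _)
  · rintro ⟨j, hj, rfl⟩
    change A.orderEmbOfFin h j < inflate A h α (A.orderEmbOfFin h j)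
    rw [inflate_emb, OrderEmbedding.lt_iff_lt]
    exact hj

/-- The `j`-th element of `A` (counted from `0`) has rank `j`. -/
theorem rk_emb {n k : ℕ} (A : Finset (Fin n)) (h : A.card = k) (j : Fin k) :
    rk (A.map Fin.valEmbedding) (A.orderEmbOfFin h j : Fin n) = j := by
  have : (A.map Fin.valEmbedding).filter (· < ((A.orderEmbOfFin h j : Fin n) : ℕ))
      = (Finset.Iio j).map ((A.orderEmbOfFin h).toEmbedding.trans Fin.valEmbedding) := by
    ext i
    simp only [Finset.mem_filter, Finset.mem_map, Finset.mem_Iio]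
    constructor
    · rintro ⟨⟨x, hx, rfl⟩, h2⟩
      obtain ⟨l, rfl⟩ := exists_emb A h hx
      exact ⟨l, (A.orderEmbOfFin h).lt_iff_lt.1 h2, rfl⟩
    · rintro ⟨l, hl, rfl⟩
      exact ⟨⟨_, A.orderEmbOfFin_mem h l, rfl⟩, (A.orderEmbOfFin h).lt_iff_lt.2 hl⟩
  rw [rk, this, Finset.card_map, Fin.card_Iio]

theorem rk_succ (A : Finset ℕ) (i : ℕ) : rk A (i + 1) = rk A i + if i ∈ A then 1 else 0 := by
  have : A.filter (· < i + 1) = if i ∈ A then insert i (A.filter (· < i)) else A.filter (· < i) := by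
    split_ifs with h <;> ext j <;> simp only [Finset.mem_filter, Finset.mem_insert] <;> grind
  unfold rk
  rw [this]
  split_ifs with h
  · rw [Finset.card_insert_of_notMem (by simp)]
  · rfl

theorem PExc_iff {n k : ℕ} (A : Finset (Fin n)) (h : A.card = k) (α : Equiv.Perm (Fin k))
    (j : Fin k) :
    PExc α j ↔ A.orderEmbOfFin h j < inflate A h α (A.orderEmbOfFin h j) := by
  rw [inflate_emb, OrderEmbedding.lt_iff_lt]
  exact ⟨fun ⟨_, h⟩ => h, fun h => ⟨j.2, h⟩⟩

theorem inflate_ne {n k : ℕ} (A : Finset (Fin n)) (h : A.card = k) (α : Equiv.Perm (Fin k))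
    (hα : ∀ i, α i ≠ i) {x : Fin n} (hx : x ∈ A) : inflate A h α x ∈ A ∧ inflate A h α x ≠ x := by
  obtain ⟨j, rfl⟩ := exists_emb A h hx
  rw [inflate_emb]
  exact ⟨A.orderEmbOfFin_mem h _, fun he => hα j ((A.orderEmbOfFin h).injective he)⟩

/-- The descents of `inflate A h α` are those of the word obtained from `α` by inserting, at the
positions outside `A`, equal letters that lie above the subexcedances and below the excedances
of `α`. -/
theorem PDes_inflate {n k : ℕ} (A : Finset (Fin n)) (h : A.card = k) (α : Equiv.Perm (Fin k))
    (hα : ∀ i, α i ≠ i) (i : ℕ) (hi : i + 1 < n) :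
    PDes (inflate A h α) i ↔ WDes (PDes α) (PExc α) (A.map Fin.valEmbedding) i := by
  set x : Fin n := ⟨i, by omega⟩ with hx
  set y : Fin n := ⟨i + 1, hi⟩ with hy
  have h0 : PDes (inflate A h α) i ↔ inflate A h α y < inflate A h α x :=
    ⟨fun ⟨_, _, h⟩ => h, fun h => ⟨_, _, h⟩⟩
  have hxA : i ∈ A.map Fin.valEmbedding ↔ x ∈ A := by
    rw [← Finset.mem_map' Fin.valEmbedding]; rfl
  have hyA : i + 1 ∈ A.map Fin.valEmbedding ↔ y ∈ A := by
    rw [← Finset.mem_map' Fin.valEmbedding]; rfl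
  have hrk := rk_succ (A.map Fin.valEmbedding) i
  simp only [hxA] at hrk
  rw [h0]
  unfold WDes
  simp only [hxA, hyA]
  by_cases hxm : x ∈ A
  · obtain ⟨j, hj⟩ := exists_emb A h hxm
    have hrx : rk (A.map Fin.valEmbedding) i = j := by rw [← rk_emb A h j, hj]
    by_cases hym : y ∈ A
    · obtain ⟨l, hl⟩ := exists_emb A h hym
      have hry : rk (A.map Fin.valEmbedding) (i + 1) = l := by rw [← rk_emb A h l, hl]
      rw [if_pos hxm, if_pos hym, hrx, ← hl, ← hj, inflate_emb, inflate_emb,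
        OrderEmbedding.lt_iff_lt]
      rw [if_pos hxm, hry, hrx] at hrk
      have hle : l = ⟨j + 1, hrk ▸ l.2⟩ := Fin.ext hrk
      rw [hle]
      exact ⟨fun h => ⟨_, _, h⟩, fun ⟨_, _, h⟩ => h⟩
    · have hn := inflate_ne A h α hα hxm
      have hny : inflate A h α x ≠ y := fun he => hym (he ▸ hn.1)
      rw [if_pos hxm, if_neg hym, hrx, PExc_iff A h, hj, inflate_notMem _ _ _ _ hym]
      simp only [Fin.lt_def, ne_eq, Fin.ext_iff, hx, hy] at *
      omega
  · rw [if_neg hxm, inflate_notMem _ _ _ _ hxm]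
    by_cases hym : y ∈ A
    · obtain ⟨l, hl⟩ := exists_emb A h hym
      have hry : rk (A.map Fin.valEmbedding) (i + 1) = l := by rw [← rk_emb A h l, hl]
      rw [if_neg hxm, add_zero] at hrk
      have hn := inflate_ne A h α hα hym
      have hny : inflate A h α y ≠ x := fun he => hxm (he ▸ hn.1)
      rw [← hrk, hry, PExc_iff A h, hl]
      have := hn.2
      simp only [hym, true_and]
      simp only [Fin.lt_def, ne_eq, Fin.ext_iff, hx, hy] at *
      omega
    · rw [inflate_notMem _ _ _ _ hym]
      simp only [hym, false_and, iff_false, not_lt]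
      simp [Fin.le_def, hx, hy]

theorem maj_inflate {n k : ℕ} (A : Finset (Fin (n + 1))) (h : A.card = k)
    (α : Equiv.Perm (Fin k)) (hα : ∀ i, α i ≠ i) :
    maj (n + 1) (inflate A h α) = wmaj (PDes α) (PExc α) (A.map Fin.valEmbedding) n := by
  rw [maj_succ_eq]
  refine Finset.sum_congr rfl fun i hi => ?_
  rw [Finset.mem_range] at hi
  simp only [PDes_inflate A h α hα i (by omega)]

/-- The permutations whose set of non-fixed points is `A` are the `inflate A h α` with `α` a
derangement. -/
theorem sum_nonfixed_eq {n k : ℕ} (A : Finset (Fin n)) (h : A.card = k)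
    (f : Equiv.Perm (Fin n) → Rqt) :
    ∑ σ ∈ Finset.univ.filter (fun σ : Equiv.Perm (Fin n) =>
        Finset.univ.filter (fun x => σ x ≠ x) = A), f σ
      = ∑ α ∈ Finset.univ.filter (fun α : Equiv.Perm (Fin k) => ∀ i, α i ≠ i),
          f (inflate A h α) := by
  symm
  refine Finset.sum_bij (fun α _ => inflate A h α) ?_ ?_ ?_ (fun _ _ => rfl)
  · intro α hα
    rw [Finset.mem_filter] at hα ⊢
    refine ⟨Finset.mem_univ _, ?_⟩
    ext x
    simp only [Finset.mem_filter, Finset.mem_univ, true_and]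
    exact ⟨fun hx => by_contra fun hA => hx (inflate_notMem A h α x hA),
      fun hx => (inflate_ne A h α hα.2 hx).2⟩
  · intro α _ β _ he
    ext j
    have := DFunLike.congr_fun he (A.orderEmbOfFin h j)
    rw [inflate_emb, inflate_emb] at this
    rw [(A.orderEmbOfFin h).injective this]
  · intro σ hσ
    rw [Finset.mem_filter] at hσ
    have hA : ∀ x, x ∈ A ↔ σ x ≠ x := fun x => by rw [← hσ.2]; simp
    have hmem : ∀ x, σ x ∈ A ↔ x ∈ A := fun x => by
      rw [hA, hA, ne_eq, ne_eq, σ.apply_eq_iff_eq]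
    set e := (A.orderIsoOfFin h).toEquiv
    have key : inflate A h (e.symm.permCongr (σ.subtypePerm hmem)) = σ := by
      ext x
      congr 1
      by_cases hx : x ∈ A
      · obtain ⟨j, rfl⟩ := exists_emb A h hx
        rw [inflate_emb]
        change ((e (e.symm (σ.subtypePerm hmem (e j))) : {x // x ∈ A}) : Fin n) = σ (e j)
        rw [Equiv.apply_symm_apply]
        rfl
      · rw [inflate_notMem _ _ _ _ hx]
        by_contra hne
        exact hx ((hA x).2 (Ne.symm hne))
    refine ⟨_, ?_, key⟩
    rw [Finset.mem_filter]
    refine ⟨Finset.mem_univ _, fun j hj => ?_⟩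
    have h1 := inflate_emb A h (e.symm.permCongr (σ.subtypePerm hmem)) j
    rw [hj, key] at h1
    exact (hA _).1 (A.orderEmbOfFin_mem h j) h1

/-- `∑ q ^ maj σ * t ^ exc σ` over the derangements of `[n]`. -/
noncomputable def dPoly (n : ℕ) : Rqt :=
  ∑ σ ∈ (Finset.univ : Finset (Equiv.Perm (Fin n))).filter (fun σ => ∀ i, σ i ≠ i),
    qv ^ maj n σ * tv ^ exc n σ

/-- The permutations of `[n]` with derangement part `α` have `maj` generating function
`[n choose k]_q * q ^ maj α`. -/
theorem sum_inflate {n k : ℕ} (hk : k ≤ n) (α : Equiv.Perm (Fin k)) (hα : ∀ i, α i ≠ i) :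
    ∑ A ∈ (Finset.powersetCard k (Finset.univ : Finset (Fin n))).attach,
        qv ^ maj n (inflate A.1 (Finset.mem_powersetCard.1 A.2).2 α)
      = qbinom qv n k * qv ^ maj k α := by
  cases n with
  | zero =>
    obtain rfl : k = 0 := by omega
    simp [maj, DesSet, qbinom]
  | succ n =>
    have h1 : ∀ A ∈ (Finset.powersetCard k (Finset.univ : Finset (Fin (n + 1)))).attach,
        qv ^ maj (n + 1) (inflate A.1 (Finset.mem_powersetCard.1 A.2).2 α)
        = qv ^ wmaj (PDes α) (PExc α) (A.1.map Fin.valEmbedding) n :=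
      fun A _ => by rw [maj_inflate _ _ _ hα]
    rw [Finset.sum_congr rfl h1, Finset.sum_attach _
      (fun A : Finset (Fin (n + 1)) =>
        qv ^ wmaj (PDes α) (PExc α) (A.map Fin.valEmbedding) n)]
    have h2 : Finset.powersetCard k (Finset.range (n + 1))
        = (Finset.powersetCard k (Finset.univ : Finset (Fin (n + 1)))).map
          (Finset.mapEmbedding Fin.valEmbedding).toEmbedding := by
      rw [← Finset.powersetCard_map, Fin.map_valEmbedding_univ, Nat.Iio_eq_range]
    have h3 : ∑ A ∈ Finset.powersetCard k (Finset.univ : Finset (Fin (n + 1))),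
          qv ^ wmaj (PDes α) (PExc α) (A.map Fin.valEmbedding) n
        = ∑ A ∈ Finset.powersetCard k (Finset.range (n + 1)),
          qv ^ wmaj (PDes α) (PExc α) A n := by
      rw [h2, Finset.sum_map]; rfl
    rw [h3]
    cases k with
    | zero => simp [maj, DesSet, qbinom_zero_right, wmaj, WDes]
    | succ k =>
      rw [sum_wmaj _ _ (k + 1) ?_ ?_ n k (by omega), maj_succ_eq, mul_comm]
      all_goals
        intro i hi
        have d1 : α ⟨i, by omega⟩ ≠ ⟨i, by omega⟩ := hα _
        have d2 : α ⟨i + 1, hi⟩ ≠ ⟨i + 1, hi⟩ := hα _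
        have d3 : α ⟨i, by omega⟩ ≠ α ⟨i + 1, hi⟩ := fun h => by simp at h
        have e1 : PExc α i ↔ i < (α ⟨i, by omega⟩ : ℕ) :=
          ⟨fun ⟨_, h⟩ => h, fun h => ⟨_, h⟩⟩
        have e2 : PExc α (i + 1) ↔ i + 1 < (α ⟨i + 1, hi⟩ : ℕ) :=
          ⟨fun ⟨_, h⟩ => h, fun h => ⟨_, h⟩⟩
        have e3 : PDes α i ↔ (α ⟨i + 1, hi⟩ : ℕ) < (α ⟨i, by omega⟩ : ℕ) :=
          ⟨fun ⟨_, _, h⟩ => h, fun h => ⟨_, _, h⟩⟩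
        rw [e1, e2, e3]
        simp only [ne_eq, Fin.ext_iff] at d1 d2 d3
        omega

theorem qEulerPoly_eq (n : ℕ) :
    qEulerPoly n = ∑ k ∈ Finset.range (n + 1), qbinom qv n k * dPoly k := by
  unfold qEulerPoly
  rw [← Finset.sum_fiberwise_of_maps_to
    (g := fun σ : Equiv.Perm (Fin n) => Finset.univ.filter (fun x => σ x ≠ x))
    (t := Finset.univ.powerset) (fun σ _ => by simp), Finset.sum_powerset, Finset.card_univ,
    Fintype.card_fin]
  refine Finset.sum_congr rfl fun k hk => ?_
  rw [Finset.mem_range] at hk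
  rw [← Finset.sum_attach]
  have h1 : ∀ A ∈ (Finset.powersetCard k (Finset.univ : Finset (Fin n))).attach,
      ∑ σ ∈ Finset.univ.filter (fun σ : Equiv.Perm (Fin n) =>
        Finset.univ.filter (fun x => σ x ≠ x) = A.1), qv ^ maj n σ * tv ^ exc n σ
      = ∑ α ∈ Finset.univ.filter (fun α : Equiv.Perm (Fin k) => ∀ i, α i ≠ i),
        qv ^ maj n (inflate A.1 (Finset.mem_powersetCard.1 A.2).2 α) * tv ^ exc k α := by
    intro A _
    rw [sum_nonfixed_eq A.1 (Finset.mem_powersetCard.1 A.2).2]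
    simp only [exc_inflate]
  refine (Finset.sum_congr rfl fun A hA => ?_).trans
    ((Finset.sum_congr rfl h1).trans ?_)
  · congr!
  · rw [Finset.sum_comm, dPoly, Finset.mul_sum]
    refine Finset.sum_congr rfl fun α hα => ?_
    rw [← Finset.sum_mul, sum_inflate (by omega) α (Finset.mem_filter.1 hα).2, mul_assoc]

/-- `Σ_{σ ∈ D_n} q^{maj σ} t^{exc σ}
 = Σ_{k=0}^n (−1)^k q^{C(k,2)} [n choose k]_q A_{n−k}^{maj,exc}(q,t)`. -/
theorem derangement_maj_exc (n : ℕ) :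
    (∑ σ ∈ (Finset.univ : Finset (Equiv.Perm (Fin n))).filter
        (fun σ => ∀ i, σ i ≠ i), qv ^ maj n σ * tv ^ exc n σ) =
    ∑ k ∈ Finset.range (n + 1),
      (-1 : Rqt) ^ k * qv ^ Nat.choose k 2 * qbinom qv n k * qEulerPoly (n - k) := by
  exact qbinom_inversion qEulerPoly dPoly qEulerPoly_eq n
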